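/- arXiv:2306.02638 — 3 statements merged into one kernel-verified Lean document; each statement's English description precedes it below -/
import Mathlib

section
/- Let A be a nonempty compact subset of 𝕂 (𝕂 = ℝ or ℂ). Then 0 ∈ conv(A) if and only if for every μ ∈ 𝕋 there exists a_μ ∈ A with Re(μ·a_μ) ≥ 0. Moreover, if A is in addition connected, then 0 ∈ conv(A) if and only if for every μ ∈ 𝕋 there exists a_μ ∈ A with Re(μ·a_μ) = 0. -/
open Filter Topology Metric

/-!
The real part of a functional is `ℝ`-linear, so its value at a point of `conv A` is at most its
value at some point of `A`. Conversely, a point outside a closed convex set is strictly separated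
from it by a functional, which can be rescaled to have norm one; the functionals of norm one on `𝕜`
are the multiplications by unimodular scalars. By Carathéodory's theorem, `conv A` is compact, hence
closed. If `A` is connected, the condition for `μ` and for `-μ` gives points of `A` where
`Re (μ * a)` has opposite signs, hence a zero in between.
-/

section Caratheodory

theorem convexHull_eq_iUnion_image_stdSimplex {𝕜 E : Type*} [Field 𝕜] [LinearOrder 𝕜]
    [IsStrictOrderedRing 𝕜] [AddCommGroup E] [Module 𝕜 E] [FiniteDimensional 𝕜 E] (s : Set E) :
    convexHull 𝕜 s = ⋃ k ∈ Set.Iic (Module.finrank 𝕜 E + 1),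
      (fun p : (Fin k → 𝕜) × (Fin k → E) ↦ ∑ i, p.1 i • p.2 i) ''
        (stdSimplex 𝕜 (Fin k) ×ˢ Set.univ.pi fun _ ↦ s) := by
  refine Set.Subset.antisymm (fun x hx ↦ ?_) (Set.iUnion₂_subset fun k _ ↦ ?_)
  · obtain ⟨ι, _, z, w, hzs, hz, hw_pos, hw_sum, rfl⟩ := eq_pos_convex_span_of_mem_convexHull hx
    have hcard : Fintype.card ι ≤ Module.finrank 𝕜 E + 1 :=
      hz.card_le_finrank_succ.trans (Nat.add_le_add_right (Submodule.finrank_le _) 1)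
    let e := (Fintype.equivFin ι).symm
    have hw : w ∘ e ∈ stdSimplex 𝕜 (Fin (Fintype.card ι)) :=
      ⟨fun i ↦ (hw_pos (e i)).le, (e.sum_comp w).trans hw_sum⟩
    exact Set.mem_biUnion hcard
      ⟨(w ∘ e, z ∘ e), ⟨hw, fun i _ ↦ hzs ⟨e i, rfl⟩⟩, e.sum_comp fun i ↦ w i • z i⟩
  · rintro _ ⟨⟨w, z⟩, ⟨⟨hw_nonneg, hw_sum⟩, hzs⟩, rfl⟩
    exact (convex_convexHull 𝕜 s).sum_mem (fun i _ ↦ hw_nonneg i) hw_sum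
      fun i _ ↦ subset_convexHull 𝕜 s (hzs i trivial)

theorem isCompact_convexHull_of_finiteDimensional {E : Type*} [AddCommGroup E] [Module ℝ E]
    [TopologicalSpace E] [ContinuousAdd E] [ContinuousSMul ℝ E] [FiniteDimensional ℝ E]
    {s : Set E} (hs : IsCompact s) : IsCompact (convexHull ℝ s) := by
  rw [convexHull_eq_iUnion_image_stdSimplex]
  exact (Set.finite_Iic _).isCompact_biUnion fun k _ ↦
    ((isCompact_stdSimplex ℝ (Fin k)).prod (isCompact_univ_pi fun _ ↦ hs)).image (by fun_prop)

end Caratheodory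

section Separation

variable {𝕜 E : Type*} [RCLike 𝕜] [AddCommGroup E] [Module ℝ E] [Module 𝕜 E]
  [IsScalarTower ℝ 𝕜 E] {A : Set E} {x : E}

theorem exists_re_le_of_mem_convexHull (f : E →ₗ[𝕜] 𝕜) (hx : x ∈ convexHull ℝ A) :
    ∃ a ∈ A, RCLike.re (f x) ≤ RCLike.re (f a) :=
  ((RCLike.reLm ∘ₗ f.restrictScalars ℝ).convexOn convex_univ).exists_ge_of_mem_convexHull
    (Set.subset_univ A) hx

theorem mem_convexHull_iff_forall_exists_re_le [TopologicalSpace E] [IsTopologicalAddGroup E]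
    [ContinuousSMul 𝕜 E] [LocallyConvexSpace ℝ E] (hA : IsClosed (convexHull ℝ A)) :
    x ∈ convexHull ℝ A ↔ ∀ f : StrongDual 𝕜 E, ∃ a ∈ A, RCLike.re (f x) ≤ RCLike.re (f a) := by
  refine ⟨fun hx f ↦ exists_re_le_of_mem_convexHull f.toLinearMap hx, fun h ↦ ?_⟩
  by_contra hx
  obtain ⟨f, u, hfA, hfx⟩ :=
    RCLike.geometric_hahn_banach_closed_point (𝕜 := 𝕜) (convex_convexHull ℝ A) hA hx
  obtain ⟨a, ha, hxa⟩ := h f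
  exact (hxa.trans_lt (hfA a (subset_convexHull ℝ A ha))).not_gt hfx

end Separation

section UnitFunctionals

variable {𝕜 E : Type*} [RCLike 𝕜] [SeminormedAddCommGroup E] [NormedSpace 𝕜 E] {A : Set E}

theorem forall_exists_re_nonneg_iff_forall_norm_eq_one (hne : A.Nonempty) :
    (∀ f : StrongDual 𝕜 E, ∃ a ∈ A, 0 ≤ RCLike.re (f a)) ↔
      ∀ f : StrongDual 𝕜 E, ‖f‖ = 1 → ∃ a ∈ A, 0 ≤ RCLike.re (f a) := by
  refine ⟨fun h f _ ↦ h f, fun h f ↦ ?_⟩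
  obtain hf | hf := eq_or_ne ‖f‖ 0
  · have hf_apply (a : E) : f a = 0 := norm_le_zero_iff.1 (by simpa [hf] using f.le_opNorm a)
    exact hne.imp fun a ha ↦ ⟨ha, by simp [hf_apply a]⟩
  obtain ⟨a, ha, hfa⟩ := h ((‖f‖⁻¹ : 𝕜) • f) (by simp [norm_smul, hf])
  rw [smul_apply, smul_eq_mul, ← RCLike.ofReal_inv, RCLike.re_ofReal_mul] at hfa
  exact ⟨a, ha, nonneg_of_mul_nonneg_right hfa (by positivity)⟩

theorem forall_exists_re_nonneg_iff_forall_exists_re_eq_zero (hA : IsPreconnected A) :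
    (∀ f : StrongDual 𝕜 E, ‖f‖ = 1 → ∃ a ∈ A, 0 ≤ RCLike.re (f a)) ↔
      ∀ f : StrongDual 𝕜 E, ‖f‖ = 1 → ∃ a ∈ A, RCLike.re (f a) = 0 := by
  refine ⟨fun h f hf ↦ ?_, fun h f hf ↦ (h f hf).imp fun _ ↦ And.imp_right Eq.ge⟩
  obtain ⟨a, ha, hfa⟩ := h f hf
  obtain ⟨b, hb, hfb⟩ : ∃ b ∈ A, RCLike.re (f b) ≤ 0 := by
    simpa using h (-f) (by rwa [norm_neg])
  exact hA.intermediate_value hb ha (RCLike.continuous_re.comp f.continuous).continuousOn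
    ⟨hfb, hfa⟩

end UnitFunctionals

theorem forall_strongDual_self_norm_eq_one_iff {𝕜 : Type*} [NontriviallyNormedField 𝕜]
    {p : StrongDual 𝕜 𝕜 → Prop} :
    (∀ f, ‖f‖ = 1 → p f) ↔ ∀ μ : 𝕜, ‖μ‖ = 1 → p (ContinuousLinearMap.mul 𝕜 𝕜 μ) := by
  rw [(ContinuousLinearMap.toSpanSingletonLIE 𝕜 𝕜).surjective.forall]
  refine forall_congr' fun μ ↦ ?_
  have hmul : ContinuousLinearMap.toSpanSingletonLIE 𝕜 𝕜 μ = ContinuousLinearMap.mul 𝕜 𝕜 μ :=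
    ContinuousLinearMap.ext fun a ↦ mul_comm a μ
  rw [LinearIsometryEquiv.norm_map, hmul]

theorem zero_mem_convexHull_iff_general {𝕜 E : Type*} [RCLike 𝕜] [SeminormedAddCommGroup E]
    [NormedSpace ℝ E] [NormedSpace 𝕜 E] [IsScalarTower ℝ 𝕜 E] {A : Set E} (hne : A.Nonempty)
    (hA : IsClosed (convexHull ℝ A)) :
    (0 ∈ convexHull ℝ A ↔
      ∀ f : StrongDual 𝕜 E, ‖f‖ = 1 → ∃ a ∈ A, 0 ≤ RCLike.re (f a)) ∧
    (IsPreconnected A →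
      (0 ∈ convexHull ℝ A ↔
        ∀ f : StrongDual 𝕜 E, ‖f‖ = 1 → ∃ a ∈ A, RCLike.re (f a) = 0)) := by
  have hiff : 0 ∈ convexHull ℝ A ↔
      ∀ f : StrongDual 𝕜 E, ‖f‖ = 1 → ∃ a ∈ A, 0 ≤ RCLike.re (f a) := by
    rw [← forall_exists_re_nonneg_iff_forall_norm_eq_one hne]
    simpa only [map_zero] using mem_convexHull_iff_forall_exists_re_le (𝕜 := 𝕜) (x := 0) hA
  exact ⟨hiff, fun hconn ↦
    hiff.trans (forall_exists_re_nonneg_iff_forall_exists_re_eq_zero hconn)⟩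

/-- For a nonempty compact set `A ⊆ 𝕂`, `0 ∈ conv A` iff for every unimodular `μ` there is
`a ∈ A` with `Re (μ * a) ≥ 0`; if moreover `A` is connected, `0 ∈ conv A` iff for every
unimodular `μ` there is `a ∈ A` with `Re (μ * a) = 0`. -/
theorem zero_mem_convexHull_iff {𝕜 : Type*} [RCLike 𝕜]
    (A : Set 𝕜) (hne : A.Nonempty) (hA : IsCompact A) :
    ((0 : 𝕜) ∈ convexHull ℝ A ↔ ∀ μ : 𝕜, ‖μ‖ = 1 → ∃ a ∈ A, 0 ≤ RCLike.re (μ * a)) ∧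
    (IsConnected A →
      ((0 : 𝕜) ∈ convexHull ℝ A ↔ ∀ μ : 𝕜, ‖μ‖ = 1 → ∃ a ∈ A, RCLike.re (μ * a) = 0)) := by
  simpa only [IsConnected, hne, true_and, forall_strongDual_self_norm_eq_one_iff,
    ContinuousLinearMap.mul_apply'] using zero_mem_convexHull_iff_general (𝕜 := 𝕜) hne
      (isCompact_convexHull_of_finiteDimensional hA).isClosed
end

section
/- Let X, Y be Banach spaces over 𝕂 (𝕂 = ℝ or ℂ) and let T : X → Y be a nonzero bounded linear operator. Suppose there exists x₀ ∈ S_X such that: (1) T x₀ is a smooth point of Y; and (2) every sequence (x_n) in the closed unit ball of X with ‖T x_n‖ → ‖T‖ has a subsequence converging in norm to α·x₀ for some α ∈ 𝕂 with |α| = 1. Then T is a smooth point of the space 𝓛(X,Y) with the operator norm. -/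
open Filter Topology Metric

/-!
The functionals `A ↦ ψ (A x)`, with `x` and `ψ` in the unit balls of `X` and `Y*`, are norming on
`𝓛(X,Y)`. Perturbing `T` to `T + t A` and letting `t → 0` shows that any support functional `Φ` of
`T` satisfies `re (Φ A) ≤ lim re (ψₙ (A xₙ))` for some such pairs with `re (ψₙ (T xₙ)) → ‖T‖`. Then
`‖T xₙ‖ → ‖T‖`, so after passing to a subsequence `xₙ → α x₀`, and the functionals `α ψₙ` almost
support `T x₀`. As `T x₀` is smooth, Banach-Alaoglu forces `α ψₙ` to converge weak-* to the support
functional `φ` of `T x₀`. Hence `re (Φ A) ≤ re (φ (A x₀))` for every `A`, which identifies `Φ`.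
-/

section SupportFunctional

variable {𝕜 E : Type*} [RCLike 𝕜] [NormedAddCommGroup E] [NormedSpace 𝕜 E]

/-- `φ` is a support functional at `z`: it has norm one and attains its norm at `z`, with the
phase normalised so that `φ z = ‖z‖`. -/
def IsSupportFunctional (φ : StrongDual 𝕜 E) (z : E) : Prop :=
  ‖φ‖ = 1 ∧ φ z = (‖z‖ : 𝕜)

variable (𝕜) in
/-- `z` is a smooth point: it has exactly one support functional. The origin is excluded
automatically, because the support functionals at `0` are closed under negation. -/
def IsSmoothPoint (z : E) : Prop :=
  ∃! φ : StrongDual 𝕜 E, IsSupportFunctional φ z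

theorem re_apply_le_norm {φ : StrongDual 𝕜 E} (hφ : ‖φ‖ ≤ 1) (z : E) :
    RCLike.re (φ z) ≤ ‖z‖ :=
  (RCLike.re_le_norm _).trans (by simpa only [one_mul] using φ.le_of_opNorm_le hφ z)

theorem isSupportFunctional_of_norm_le_re {φ : StrongDual 𝕜 E} {z : E} (hz : z ≠ 0)
    (hφ : ‖φ‖ ≤ 1) (hφz : ‖z‖ ≤ RCLike.re (φ z)) : IsSupportFunctional φ z := by
  have hle : ‖φ z‖ ≤ ‖z‖ := by simpa only [one_mul] using φ.le_of_opNorm_le hφ z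
  have hnorm : ‖φ z‖ = ‖z‖ := hle.antisymm (hφz.trans (RCLike.re_le_norm _))
  refine ⟨hφ.antisymm ?_, ?_⟩
  · exact (le_mul_iff_one_le_left (norm_pos_iff.2 hz)).1 (hnorm ▸ φ.le_opNorm z)
  · rw [← hnorm]
    exact RCLike.norm_le_re_iff_eq_norm.1 (hle.trans hφz)

theorem IsSmoothPoint.ne_zero {z : E} (hz : IsSmoothPoint 𝕜 z) : z ≠ 0 := by
  rintro rfl
  obtain ⟨φ, ⟨hφ, -⟩, hunique⟩ := hz
  have hneg : -φ = φ := hunique (-φ) ⟨by rw [norm_neg, hφ], by simp⟩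
  have hzero : φ = 0 := ContinuousLinearMap.ext fun y => neg_eq_self.1 (DFunLike.congr_fun hneg y)
  simp [hzero] at hφ

/-- Half of Šmulian's criterion. The unit ball of the dual is weak-* compact, so it is enough that
every weak-* cluster point supports `z`. -/
theorem IsSmoothPoint.tendsto_apply {ι : Type*} {l : Filter ι} {z : E} (hz : IsSmoothPoint 𝕜 z)
    {φ : StrongDual 𝕜 E} (hφ : IsSupportFunctional φ z) {ψ : ι → StrongDual 𝕜 E}
    (hψ : ∀ i, ‖ψ i‖ ≤ 1) (hψz : Tendsto (fun i => RCLike.re (ψ i z)) l (𝓝 ‖z‖)) (y : E) :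
    Tendsto (fun i => ψ i y) l (𝓝 (φ y)) := by
  suffices Tendsto (fun i => StrongDual.toWeakDual (ψ i)) l (𝓝 (StrongDual.toWeakDual φ)) from
    ((WeakDual.eval_continuous y).tendsto _).comp this
  refine (WeakDual.isCompact_closedBall (0 : StrongDual 𝕜 E) 1).tendsto_nhds_of_unique_mapClusterPt
    (Eventually.of_forall fun i => by simpa using hψ i) fun χ hχ hcluster => ?_
  have hreal : Continuous fun χ : WeakDual 𝕜 E => RCLike.re (χ z) :=
    RCLike.continuous_re.comp (WeakDual.eval_continuous z)
  have hχz : RCLike.re (χ z) = ‖z‖ :=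
    eq_of_nhds_neBot <| NeBot.mono (hcluster.continuousAt_comp hreal.continuousAt) <|
      inf_le_inf_left _ hψz
  exact hz.unique (isSupportFunctional_of_norm_le_re hz.ne_zero
    (mem_closedBall_zero_iff.1 hχ) hχz.ge) hφ

theorem tendsto_apply_sub_apply {ι : Type*} {l : Filter ι} {ψ : ι → StrongDual 𝕜 E}
    (hψ : ∀ i, ‖ψ i‖ ≤ 1) {u : ι → E} {y : E} (hu : Tendsto u l (𝓝 y)) :
    Tendsto (fun i => ψ i (u i) - ψ i y) l (𝓝 0) := by
  refine squeeze_zero_norm (fun i => ?_) (tendsto_iff_norm_sub_tendsto_zero.1 hu)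
  simpa only [map_sub, one_mul] using (ψ i).le_of_opNorm_le (hψ i) (u i - y)

end SupportFunctional

theorem eq_of_forall_re_le {𝕜 E : Type*} [RCLike 𝕜] [AddCommMonoid E] [Module 𝕜 E]
    {f g : Module.Dual 𝕜 E} (h : ∀ x, RCLike.re (f x) ≤ RCLike.re (g x)) : f = g := by
  ext x
  have hre : RCLike.re (star (f x - g x) * (f x - g x)) ≤ 0 := by
    simpa only [map_smul, smul_eq_mul, mul_sub, map_sub, sub_nonpos] using h (star (f x - g x) • x)
  rw [RCLike.star_def, RCLike.conj_mul, ← RCLike.ofReal_pow, RCLike.ofReal_re] at hre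
  exact sub_eq_zero.1 (norm_eq_zero.1 (sq_nonpos_iff _ |>.1 hre))

section Norming

variable {𝕜 E : Type*} [RCLike 𝕜] [NormedAddCommGroup E] [NormedSpace 𝕜 E]

/-- `N` is a norming set of functionals: it recovers the norm of every vector as a supremum. Real
parts replace absolute values, so that the members of `N` need no rotation. -/
def IsNorming (N : Set (StrongDual 𝕜 E)) : Prop :=
  ∀ e : E, IsLUB ((fun f : StrongDual 𝕜 E => RCLike.re (f e)) '' N) ‖e‖

variable {N : Set (StrongDual 𝕜 E)} {z : E} {Φ : StrongDual 𝕜 E}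

theorem IsNorming.re_le_norm (hN : IsNorming N) {f : StrongDual 𝕜 E} (hf : f ∈ N) (e : E) :
    RCLike.re (f e) ≤ ‖e‖ :=
  (hN e).1 ⟨f, hf, rfl⟩

theorem IsNorming.exists_lt_re_apply (hN : IsNorming N) {e : E} {r : ℝ} (hr : r < ‖e‖) :
    ∃ f ∈ N, r < RCLike.re (f e) := by
  simpa only [Set.exists_mem_image] using (lt_isLUB_iff (hN e)).1 hr

theorem IsNorming.exists_almost_supporting (hN : IsNorming N) (hΦ : IsSupportFunctional Φ z)
    (a : E) {t : ℝ} (ht : 0 < t) :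
    ∃ f ∈ N, ‖z‖ - (2 * ‖a‖ + t) * t ≤ RCLike.re (f z) ∧
      RCLike.re (Φ a) - t ≤ RCLike.re (f a) := by
  have re_perturbed (f : StrongDual 𝕜 E) :
      RCLike.re (f (z + (t : 𝕜) • a)) = RCLike.re (f z) + t * RCLike.re (f a) := by
    simp
  -- The slack `t ^ 2` still vanishes after division by `t`.
  obtain ⟨f, hfN, hf⟩ := hN.exists_lt_re_apply
    (sub_lt_self ‖z + (t : 𝕜) • a‖ (pow_pos ht 2))
  have hΦle : ‖z‖ + t * RCLike.re (Φ a) ≤ ‖z + (t : 𝕜) • a‖ := by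
    simpa only [re_perturbed, hΦ.2, RCLike.ofReal_re] using
      re_apply_le_norm hΦ.1.le (z + (t : 𝕜) • a)
  have hΦa : -‖a‖ ≤ RCLike.re (Φ a) := by
    simpa only [map_neg, norm_neg, neg_le] using re_apply_le_norm hΦ.1.le (-a)
  have hfz : RCLike.re (f z) ≤ ‖z‖ := hN.re_le_norm hfN z
  have hfa : RCLike.re (f a) ≤ ‖a‖ := hN.re_le_norm hfN a
  rw [re_perturbed] at hf
  refine ⟨f, hfN, by nlinarith, le_of_mul_le_mul_left ?_ ht⟩
  linarith

theorem IsNorming.exists_seq_tendsto (hN : IsNorming N) (hΦ : IsSupportFunctional Φ z) (a : E) :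
    ∃ (f : ℕ → StrongDual 𝕜 E) (t : ℕ → ℝ), (∀ n, f n ∈ N) ∧
      Tendsto (fun n => RCLike.re (f n z)) atTop (𝓝 ‖z‖) ∧
      Tendsto t atTop (𝓝 0) ∧ ∀ n, RCLike.re (Φ a) - t n ≤ RCLike.re (f n a) := by
  have ht : Tendsto (fun n : ℕ => 1 / ((n : ℝ) + 1)) atTop (𝓝 0) :=
    tendsto_one_div_add_atTop_nhds_zero_nat
  choose f hfN hfz hfa using fun n : ℕ =>
    hN.exists_almost_supporting hΦ a (Nat.one_div_pos_of_nat (α := ℝ) (n := n))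
  refine ⟨f, _, hfN, tendsto_of_tendsto_of_tendsto_of_le_of_le ?_ tendsto_const_nhds hfz
    fun n => hN.re_le_norm (hfN n) z, ht, hfa⟩
  simpa using ((ht.const_add (2 * ‖a‖)).mul ht).const_sub ‖z‖

theorem IsNorming.isSmoothPoint (hN : IsNorming N) (hz : z ≠ 0) {Φ₀ : StrongDual 𝕜 E}
    (hsubseq : ∀ f : ℕ → StrongDual 𝕜 E, (∀ n, f n ∈ N) →
      Tendsto (fun n => RCLike.re (f n z)) atTop (𝓝 ‖z‖) →
      ∀ a, ∃ σ : ℕ → ℕ, StrictMono σ ∧ Tendsto (fun n => f (σ n) a) atTop (𝓝 (Φ₀ a))) :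
    IsSmoothPoint 𝕜 z := by
  have eq_limit {Φ : StrongDual 𝕜 E} (hΦ : IsSupportFunctional Φ z) : Φ = Φ₀ := by
    refine ContinuousLinearMap.coe_injective (eq_of_forall_re_le fun a => ?_)
    obtain ⟨f, t, hfN, hfz, ht, hfa⟩ := hN.exists_seq_tendsto hΦ a
    obtain ⟨σ, hσ, hlim⟩ := hsubseq f hfN hfz a
    have hlower : Tendsto (fun n => RCLike.re (Φ a) - t (σ n)) atTop (𝓝 (RCLike.re (Φ a))) := by
      simpa using (ht.comp hσ.tendsto_atTop).const_sub (RCLike.re (Φ a))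
    exact le_of_tendsto_of_tendsto' hlower ((RCLike.continuous_re.tendsto _).comp hlim)
      fun n => hfa (σ n)
  obtain ⟨Φ, hΦ⟩ := exists_dual_vector 𝕜 z (norm_ne_zero_iff.2 hz)
  exact ⟨Φ, hΦ, fun Ψ hΨ => (eq_limit hΨ).trans (eq_limit hΦ).symm⟩

end Norming

section Operator

variable {𝕜 X Y : Type*} [RCLike 𝕜] [NormedAddCommGroup X] [NormedSpace 𝕜 X]
  [NormedAddCommGroup Y] [NormedSpace 𝕜 Y]

/-- The elementary tensor `x ⊗ ψ`, viewed as the functional `A ↦ ψ (A x)` on `𝓛(X,Y)`. -/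
noncomputable def pointFunctional (x : X) (ψ : StrongDual 𝕜 Y) : StrongDual 𝕜 (X →L[𝕜] Y) :=
  ψ.comp (ContinuousLinearMap.apply 𝕜 Y x)

@[simp]
theorem pointFunctional_apply (x : X) (ψ : StrongDual 𝕜 Y) (A : X →L[𝕜] Y) :
    pointFunctional x ψ A = ψ (A x) :=
  rfl

theorem isNorming_image2_pointFunctional :
    IsNorming (Set.image2 (pointFunctional (𝕜 := 𝕜) (X := X) (Y := Y))
      (closedBall 0 1) (closedBall 0 1)) := by
  refine fun A => ⟨?_, fun b hb => le_of_forall_lt fun r hr => ?_⟩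
  · rintro - ⟨-, ⟨x, hx, ψ, hψ, rfl⟩, rfl⟩
    exact (re_apply_le_norm (mem_closedBall_zero_iff.1 hψ) (A x)).trans
      (A.unit_le_opNorm x (mem_closedBall_zero_iff.1 hx))
  · obtain ⟨x, hx, hrx⟩ := A.exists_lt_apply_of_lt_opNorm hr
    obtain ⟨ψ, hψ, hψA⟩ := exists_dual_vector'' 𝕜 (A x)
    refine hrx.trans_le (hb ⟨pointFunctional x ψ, ⟨x, ?_, ψ, ?_, rfl⟩, ?_⟩)
    · exact mem_closedBall_zero_iff.2 hx.le
    · exact mem_closedBall_zero_iff.2 hψ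
    · simp [hψA]

/-- `T` absolutely strongly exposes `x₀`: every norming sequence of `T` in the unit ball clusters
at a unimodular multiple of `x₀`. It says that `T` attains its norm, in a strong sense, only at
`x₀` up to phase. -/
def AbsolutelyStronglyExposes (T : X →L[𝕜] Y) (x₀ : X) : Prop :=
  ∀ x : ℕ → X, (∀ n, ‖x n‖ ≤ 1) → Tendsto (fun n => ‖T (x n)‖) atTop (𝓝 ‖T‖) →
    ∃ (α : 𝕜) (σ : ℕ → ℕ), ‖α‖ = 1 ∧ StrictMono σ ∧ Tendsto (fun n => x (σ n)) atTop (𝓝 (α • x₀))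

variable {T : X →L[𝕜] Y} {x₀ : X} {ι : Type*} {l : Filter ι}

theorem tendsto_norm_apply_of_tendsto_re {x : ι → X} (hx : ∀ n, ‖x n‖ ≤ 1)
    {ψ : ι → StrongDual 𝕜 Y} (hψ : ∀ n, ‖ψ n‖ ≤ 1)
    (h : Tendsto (fun n => RCLike.re (ψ n (T (x n)))) l (𝓝 ‖T‖)) :
    Tendsto (fun n => ‖T (x n)‖) l (𝓝 ‖T‖) :=
  tendsto_of_tendsto_of_tendsto_of_le_of_le h tendsto_const_nhds
    (fun n => re_apply_le_norm (hψ n) _) fun n => T.unit_le_opNorm _ (hx n)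

/-- Smoothness of `T x₀` controls the functionals only after the phase `α` of the limit of `x` has
been moved onto them. -/
theorem IsSmoothPoint.tendsto_apply_apply (hsmooth : IsSmoothPoint 𝕜 (T x₀))
    {φ : StrongDual 𝕜 Y} (hφ : IsSupportFunctional φ (T x₀)) {α : 𝕜} (hα : ‖α‖ = 1)
    {x : ι → X} (hx : Tendsto x l (𝓝 (α • x₀)))
    {ψ : ι → StrongDual 𝕜 Y} (hψ : ∀ n, ‖ψ n‖ ≤ 1)
    (h : Tendsto (fun n => RCLike.re (ψ n (T (x n)))) l (𝓝 ‖T x₀‖)) (A : X →L[𝕜] Y) :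
    Tendsto (fun n => ψ n (A (x n))) l (𝓝 (φ (A x₀))) := by
  have hdiff (B : X →L[𝕜] Y) :
      Tendsto (fun n => ψ n (B (x n)) - (α • ψ n) (B x₀)) l (𝓝 0) := by
    simpa using tendsto_apply_sub_apply hψ ((B.continuous.tendsto _).comp hx)
  have hsupport : Tendsto (fun n => RCLike.re ((α • ψ n) (T x₀))) l (𝓝 ‖T x₀‖) := by
    simpa using h.sub ((RCLike.continuous_re.tendsto _).comp (hdiff T))
  have hweak : Tendsto (fun n => (α • ψ n) (A x₀)) l (𝓝 (φ (A x₀))) :=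
    hsmooth.tendsto_apply hφ (fun n => by simpa [norm_smul, hα] using hψ n) hsupport (A x₀)
  simpa using (hdiff A).add hweak

theorem norm_apply_eq_of_tendsto [NeBot l] {α : 𝕜} (hα : ‖α‖ = 1) {x : ι → X}
    (hx : Tendsto x l (𝓝 (α • x₀))) {r : ℝ} (h : Tendsto (fun n => ‖T (x n)‖) l (𝓝 r)) :
    ‖T x₀‖ = r := by
  have hlim := tendsto_nhds_unique ((T.continuous.tendsto _).comp hx).norm h
  simpa [norm_smul, hα] using hlim

theorem smooth_operator_sufficient_condition_general (hsmooth : IsSmoothPoint 𝕜 (T x₀))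
    (hT : AbsolutelyStronglyExposes T x₀) : IsSmoothPoint 𝕜 T := by
  have hT₀ : T ≠ 0 := fun h => hsmooth.ne_zero (by simp [h])
  obtain ⟨φ, hφ⟩ := hsmooth.exists
  refine isNorming_image2_pointFunctional.isSmoothPoint hT₀ (Φ₀ := pointFunctional x₀ φ)
    fun f hf hfT A => ?_
  choose x hx ψ hψ hf using hf
  obtain rfl : (fun n => pointFunctional (x n) (ψ n)) = f := funext hf
  simp only [mem_closedBall_zero_iff] at hx hψ
  simp only [pointFunctional_apply] at hfT ⊢
  have hTx := tendsto_norm_apply_of_tendsto_re hx hψ hfT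
  obtain ⟨α, σ, hα, hσ, hxσ⟩ := hT x hx hTx
  have hattain : ‖T x₀‖ = ‖T‖ :=
    norm_apply_eq_of_tendsto hα hxσ (hTx.comp hσ.tendsto_atTop)
  refine ⟨σ, hσ, hsmooth.tendsto_apply_apply hφ hα hxσ (fun n => hψ (σ n)) ?_ A⟩
  rw [hattain]
  exact hfT.comp hσ.tendsto_atTop

end Operator

/-- A sufficient condition for a nonzero bounded linear operator `T : X → Y` to be a smooth
point of `𝓛(X,Y)`: there is `x₀ ∈ S_X` such that `T x₀` is a smooth point of `Y` and every
sequence in `B_X` along which `‖T·‖` tends to `‖T‖` has a subsequence converging to a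
unimodular multiple of `x₀`. -/
theorem smooth_operator_sufficient_condition {𝕜 X Y : Type*} [RCLike 𝕜]
    [NormedAddCommGroup X] [NormedSpace 𝕜 X] [CompleteSpace X]
    [NormedAddCommGroup Y] [NormedSpace 𝕜 Y] [CompleteSpace Y]
    (T : X →L[𝕜] Y) (hT : T ≠ 0) (x₀ : X) (hx₀ : ‖x₀‖ = 1)
    (h1 : ∃! φ : Y →L[𝕜] 𝕜, ‖φ‖ = 1 ∧ φ (T x₀) = (‖T x₀‖ : 𝕜))
    (h2 : ∀ x : ℕ → X, (∀ n, ‖x n‖ ≤ 1) →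
      Tendsto (fun n => ‖T (x n)‖) atTop (𝓝 ‖T‖) →
      ∃ (α : 𝕜) (σ : ℕ → ℕ), ‖α‖ = 1 ∧ StrictMono σ ∧
        Tendsto (fun n => x (σ n)) atTop (𝓝 (α • x₀))) :
    ∃! Φ : (X →L[𝕜] Y) →L[𝕜] 𝕜, ‖Φ‖ = 1 ∧ Φ T = (‖T‖ : 𝕜) :=
  smooth_operator_sufficient_condition_general h1 h2
end

section
/- Let Z be a Banach space over 𝕂 (𝕂 = ℝ or ℂ), let u ∈ Z with ‖u‖ = 1, and define v_u(w) = sup{ |φ(w)| : φ ∈ Z*, ‖φ‖ = 1, φ(u) = 1 } for w ∈ Z. Assume u is a vertex, i.e., v_u(w) = 0 implies w = 0. Let z ∈ Z be nonzero and suppose z is smooth with respect to v_u, i.e., there is exactly one linear functional ψ : Z → 𝕂 satisfying |ψ(w)| ≤ v_u(w) for all w ∈ Z and ψ(z) = v_u(z). Then z is not Birkhoff-James orthogonal to u with respect to v_u; that is, there exists λ ∈ 𝕂 with v_u(z + λu) < v_u(z). -/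
open Filter Topology Metric

/-- The numerical radius `v_u(w)` of `w` with respect to a norm-one element `u` of a Banach
space: the supremum of `‖φ w‖` over the states `φ` relative to `u`. -/
noncomputable def numericalRadius (𝕜 : Type*) {Z : Type*} [RCLike 𝕜]
    [NormedAddCommGroup Z] [NormedSpace 𝕜 Z] (u w : Z) : ℝ :=
  sSup ((fun φ : Z →L[𝕜] 𝕜 => ‖φ w‖) '' {φ | ‖φ‖ = 1 ∧ φ u = 1})

/-!
All states `φ` with `‖φ z‖ = v_u(z)` become support functionals of `v_u` at `z` after multiplication
by a unimodular scalar. If `z` is smooth, these multiples coincide, and since every state takes the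
value `1` at `u`, so do the states. Hence the numerical range `{φ z}`, a compact subset of the disc
of radius `v_u(z)`, touches the bounding circle at a single point `p`. A small translation in the
direction `-p` moves it into the open disc, and translating the numerical range of `z` by `λ`
amounts to replacing `z` by `z + λ u`.
-/

section Ball

variable {E : Type*} [SeminormedAddCommGroup E] [InnerProductSpace ℝ E]

lemma norm_sub_smul_lt_norm {c w : E} {t : ℝ} (ht : 0 < t)
    (h : t * ‖c‖ ^ 2 < 2 * inner ℝ w c) : ‖w - t • c‖ < ‖w‖ := by
  refine lt_of_pow_lt_pow_left₀ 2 (norm_nonneg w) ?_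
  calc ‖w - t • c‖ ^ 2 = ‖w‖ ^ 2 - t * (2 * inner ℝ w c - t * ‖c‖ ^ 2) := by
        rw [norm_sub_sq_real, real_inner_smul_right, norm_smul, mul_pow, Real.norm_eq_abs, sq_abs]
        ring
    _ < ‖w‖ ^ 2 := sub_lt_self _ (mul_pos ht (sub_pos.2 h))

lemma eventually_subset_ball_smul_of_isCompact {W : Set E} (hW : IsCompact W) {r : ℝ} {c : E}
    (hball : W ⊆ closedBall 0 r) (hsphere : ∀ w ∈ W, ‖w‖ = r → 0 < inner ℝ w c) :
    ∀ᶠ t in 𝓝[>] (0 : ℝ), W ⊆ ball (t • c) r := by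
  have hlocal : ∀ w ∈ W, ∀ᶠ p : ℝ × E in 𝓝 (0, w),
      0 < p.1 → ‖p.2‖ ≤ r → ‖p.2 - p.1 • c‖ < r := by
    intro w hw
    rcases (mem_closedBall_zero_iff.1 (hball hw)).lt_or_eq with hlt | heq
    · have hcont : Continuous fun p : ℝ × E => ‖p.2 - p.1 • c‖ := by fun_prop
      filter_upwards [hcont.continuousAt.eventually_lt_const (u := r) (by simpa using hlt)]
        with p hp _ _ using hp
    · have hcont : Continuous fun p : ℝ × E => 2 * inner ℝ p.2 c - p.1 * ‖c‖ ^ 2 := by fun_prop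
      filter_upwards [hcont.continuousAt.eventually_const_lt (u := 0)
        (by simpa using hsphere w hw heq)] with p hp ht hpr
      exact (norm_sub_smul_lt_norm ht (sub_pos.1 hp)).trans_le hpr
  refine eventually_nhdsWithin_iff.2 ?_
  filter_upwards [hW.eventually_forall_of_forall_eventually
    (P := fun t w => 0 < t → ‖w‖ ≤ r → ‖w - t • c‖ < r) hlocal] with t ht htpos w hw
  exact mem_ball_iff_norm.2 (ht w hw htpos (mem_closedBall_zero_iff.1 (hball hw)))

end Ball

section SupportFunctionals

variable {𝕜 Z : Type*} [RCLike 𝕜] [AddCommGroup Z] [Module 𝕜 Z]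

/-- The support functionals at `z` of a function `v`, in practice a seminorm: the linear functionals
dominated by `v` whose value at `z` is `v z`. The point `z` is smooth with respect to the seminorm
`v` when there is exactly one. -/
def supportFunctionals (𝕜 : Type*) {Z : Type*} [RCLike 𝕜] [AddCommGroup Z] [Module 𝕜 Z]
    (v : Z → ℝ) (z : Z) : Set (Z →ₗ[𝕜] 𝕜) :=
  {ψ | (∀ w, ‖ψ w‖ ≤ v w) ∧ ψ z = (v z : 𝕜)}

lemma zero_mem_supportFunctionals {v : Z → ℝ} {z : Z} (hv : ∀ w, 0 ≤ v w) (hz : v z = 0) :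
    0 ∈ supportFunctionals 𝕜 v z :=
  ⟨by simpa using hv, by simp [hz]⟩

lemma exists_smul_mem_supportFunctionals {v : Z → ℝ} {z : Z} {ψ : Z →ₗ[𝕜] 𝕜}
    (hψ : ∀ w, ‖ψ w‖ ≤ v w) (hψz : ‖ψ z‖ = v z) :
    ∃ a : 𝕜, ‖a‖ = 1 ∧ a • ψ ∈ supportFunctionals 𝕜 v z := by
  obtain ⟨a, ha, haz⟩ := RCLike.exists_norm_eq_mul_self (ψ z)
  exact ⟨a, ha, fun w => by simpa [ha] using hψ w, by simp [← haz, hψz]⟩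

end SupportFunctionals

section States

/-- The states of a normed space relative to `u`: the norm-one functionals with value `1` at `u`. -/
def stateSet (𝕜 : Type*) {Z : Type*} [RCLike 𝕜] [NormedAddCommGroup Z] [NormedSpace 𝕜 Z]
    (u : Z) : Set (Z →L[𝕜] 𝕜) :=
  {φ | ‖φ‖ = 1 ∧ φ u = 1}

/-- The numerical range of `w` relative to `u`: the set of values at `w` of the states. -/
def numericalRange (𝕜 : Type*) {Z : Type*} [RCLike 𝕜] [NormedAddCommGroup Z] [NormedSpace 𝕜 Z]
    (u w : Z) : Set 𝕜 :=
  (fun φ : Z →L[𝕜] 𝕜 => φ w) '' stateSet 𝕜 u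

variable {𝕜 Z : Type*} [RCLike 𝕜] [NormedAddCommGroup Z] [NormedSpace 𝕜 Z] {u : Z}

lemma stateSet_nonempty (hu : ‖u‖ = 1) : (stateSet 𝕜 u).Nonempty := by
  obtain ⟨φ, hφ, hφu⟩ := exists_dual_vector 𝕜 u (by simp [hu])
  exact ⟨φ, hφ, by simpa [hu] using hφu⟩

lemma mem_stateSet_iff_norm_le_one (hu : ‖u‖ = 1) {φ : Z →L[𝕜] 𝕜} :
    φ ∈ stateSet 𝕜 u ↔ ‖φ‖ ≤ 1 ∧ φ u = 1 := by
  refine and_congr_left fun hφu => ⟨le_of_eq, fun hφ => hφ.antisymm ?_⟩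
  simpa [hφu, hu] using φ.le_opNorm u

lemma isCompact_toStrongDual_preimage_stateSet (hu : ‖u‖ = 1) :
    IsCompact (WeakDual.toStrongDual ⁻¹' stateSet 𝕜 u) := by
  have hclosed : IsClosed {φ : WeakDual 𝕜 Z | φ u = 1} :=
    isClosed_eq (WeakDual.eval_continuous u) continuous_const
  convert (WeakDual.isCompact_closedBall (0 : StrongDual 𝕜 Z) 1).inter_right hclosed using 1
  ext φ
  rw [Set.mem_preimage, mem_stateSet_iff_norm_le_one hu, Set.mem_inter_iff, Set.mem_preimage,
    mem_closedBall_zero_iff]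
  rfl

lemma isCompact_numericalRange (hu : ‖u‖ = 1) (w : Z) : IsCompact (numericalRange 𝕜 u w) :=
  (isCompact_toStrongDual_preimage_stateSet hu).image (WeakDual.eval_continuous w)

lemma numericalRadius_eq_sSup_norm_image_numericalRange (w : Z) :
    numericalRadius 𝕜 u w = sSup (norm '' numericalRange 𝕜 u w) := by
  rw [numericalRange, Set.image_image]
  rfl

lemma numericalRadius_nonneg (w : Z) : 0 ≤ numericalRadius 𝕜 u w :=
  Real.sSup_nonneg (Set.forall_mem_image.2 fun φ _ => norm_nonneg (φ w))

lemma norm_apply_le_numericalRadius {φ : Z →L[𝕜] 𝕜} (hφ : φ ∈ stateSet 𝕜 u) (w : Z) :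
    ‖φ w‖ ≤ numericalRadius 𝕜 u w := by
  refine le_csSup ⟨‖w‖, Set.forall_mem_image.2 fun χ hχ => ?_⟩ (Set.mem_image_of_mem _ hφ)
  simpa using χ.le_of_opNorm_le hχ.1.le w

lemma exists_mem_stateSet_norm_apply_eq_numericalRadius (hu : ‖u‖ = 1) (w : Z) :
    ∃ φ ∈ stateSet 𝕜 u, ‖φ w‖ = numericalRadius 𝕜 u w := by
  obtain ⟨_, ⟨φ, hφ, rfl⟩, hmax⟩ := (isCompact_numericalRange (𝕜 := 𝕜) hu w).exists_sSup_image_eq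
    ((stateSet_nonempty hu).image _) continuous_norm.continuousOn
  exact ⟨φ, hφ, hmax ▸ (numericalRadius_eq_sSup_norm_image_numericalRange w).symm⟩

lemma numericalRadius_lt_iff (hu : ‖u‖ = 1) {w : Z} {r : ℝ} :
    numericalRadius 𝕜 u w < r ↔ ∀ φ ∈ stateSet 𝕜 u, ‖φ w‖ < r := by
  refine ⟨fun h φ hφ => (norm_apply_le_numericalRadius hφ w).trans_lt h, fun h => ?_⟩
  obtain ⟨φ, hφ, hφw⟩ := exists_mem_stateSet_norm_apply_eq_numericalRadius (𝕜 := 𝕜) hu w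
  exact hφw ▸ h φ hφ

end States

section Smooth

variable {𝕜 Z : Type*} [RCLike 𝕜] [NormedAddCommGroup Z] [NormedSpace 𝕜 Z] {u z : Z}

lemma eq_of_subsingleton_supportFunctionals
    (hsmooth : (supportFunctionals 𝕜 (numericalRadius 𝕜 u) z).Subsingleton)
    {φ χ : Z →L[𝕜] 𝕜} (hφ : φ ∈ stateSet 𝕜 u) (hχ : χ ∈ stateSet 𝕜 u)
    (hφz : ‖φ z‖ = numericalRadius 𝕜 u z) (hχz : ‖χ z‖ = numericalRadius 𝕜 u z) : φ = χ := by
  obtain ⟨a, ha, haφ⟩ := exists_smul_mem_supportFunctionals (ψ := (φ : Z →ₗ[𝕜] 𝕜))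
    (norm_apply_le_numericalRadius hφ) hφz
  obtain ⟨b, -, hbχ⟩ := exists_smul_mem_supportFunctionals (ψ := (χ : Z →ₗ[𝕜] 𝕜))
    (norm_apply_le_numericalRadius hχ) hχz
  have heq : a • (φ : Z →ₗ[𝕜] 𝕜) = b • (χ : Z →ₗ[𝕜] 𝕜) := hsmooth haφ hbχ
  obtain rfl : a = b := by simpa [hφ.2, hχ.2] using LinearMap.congr_fun heq u
  have ha0 : a ≠ 0 := ne_zero_of_norm_ne_zero (by simp [ha])
  exact ContinuousLinearMap.coe_injective (smul_right_injective _ ha0 heq)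

lemma numericalRadius_pos_of_subsingleton_supportFunctionals (hu : ‖u‖ = 1)
    (hsmooth : (supportFunctionals 𝕜 (numericalRadius 𝕜 u) z).Subsingleton) :
    0 < numericalRadius 𝕜 u z := by
  refine (numericalRadius_nonneg z).lt_of_ne' fun hz => ?_
  obtain ⟨φ, hφ, hφz⟩ := exists_mem_stateSet_norm_apply_eq_numericalRadius (𝕜 := 𝕜) hu z
  have hφmem : (φ : Z →ₗ[𝕜] 𝕜) ∈ supportFunctionals 𝕜 (numericalRadius 𝕜 u) z :=
    ⟨norm_apply_le_numericalRadius hφ, by simpa [hz] using hφz⟩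
  have hφ0 := hsmooth hφmem (zero_mem_supportFunctionals numericalRadius_nonneg hz)
  simpa [hφ.2] using LinearMap.congr_fun hφ0 u

theorem smooth_in_numerical_radius_not_orthogonal_to_vertex_general (hu : ‖u‖ = 1)
    (hsmooth : (supportFunctionals 𝕜 (numericalRadius 𝕜 u) z).Subsingleton) :
    ∃ lam : 𝕜, numericalRadius 𝕜 u (z + lam • u) < numericalRadius 𝕜 u z := by
  obtain ⟨φ₀, hφ₀, hφ₀z⟩ := exists_mem_stateSet_norm_apply_eq_numericalRadius (𝕜 := 𝕜) hu z
  have hpos : 0 < numericalRadius 𝕜 u z :=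
    numericalRadius_pos_of_subsingleton_supportFunctionals hu hsmooth
  have hball : numericalRange 𝕜 u z ⊆ closedBall 0 (numericalRadius 𝕜 u z) :=
    Set.image_subset_iff.2 fun φ hφ =>
      mem_closedBall_zero_iff.2 (norm_apply_le_numericalRadius hφ z)
  have hsphere : ∀ w ∈ numericalRange 𝕜 u z, ‖w‖ = numericalRadius 𝕜 u z →
      0 < inner ℝ w (φ₀ z) := by
    rintro _ ⟨φ, hφ, rfl⟩ hφz
    obtain rfl := eq_of_subsingleton_supportFunctionals hsmooth hφ hφ₀ hφz hφ₀z
    exact real_inner_self_pos.2 (norm_pos_iff.1 (hφz ▸ hpos))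
  obtain ⟨t, ht⟩ := (eventually_subset_ball_smul_of_isCompact
    (isCompact_numericalRange hu z) hball hsphere).exists
  refine ⟨-(t • φ₀ z), (numericalRadius_lt_iff hu).2 fun φ hφ => ?_⟩
  have hmem : φ z ∈ ball (t • φ₀ z) (numericalRadius 𝕜 u z) := ht (Set.mem_image_of_mem _ hφ)
  simpa [hφ.2, dist_eq_norm, sub_eq_add_neg] using hmem

end Smooth

/-- If `u` is a vertex of a Banach space `Z` and `z` is smooth in `(Z, v_u)`, then `z` is not
Birkhoff-James orthogonal to `u` with respect to the norm `v_u`. -/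
theorem smooth_in_numerical_radius_not_orthogonal_to_vertex {𝕜 Z : Type*} [RCLike 𝕜]
    [NormedAddCommGroup Z] [NormedSpace 𝕜 Z] [CompleteSpace Z]
    (u : Z) (hu : ‖u‖ = 1)
    (hvertex : ∀ w : Z, numericalRadius 𝕜 u w = 0 → w = 0)
    (z : Z) (hz : z ≠ 0)
    (hsmooth : ∃! ψ : Z →ₗ[𝕜] 𝕜, (∀ w : Z, ‖ψ w‖ ≤ numericalRadius 𝕜 u w) ∧
      ψ z = (numericalRadius 𝕜 u z : 𝕜)) :
    ∃ lam : 𝕜, numericalRadius 𝕜 u (z + lam • u) < numericalRadius 𝕜 u z :=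
  smooth_in_numerical_radius_not_orthogonal_to_vertex_general hu
    fun _ hψ _ hχ => hsmooth.unique hψ hχ
end
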